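/- arXiv:2007.12987 — 4 statements merged into one kernel-verified Lean document; each statement's English description precedes it below -/
import Mathlib

section
/- (Shift coupling for the Laplace distribution.) Let ε > 0 and v1, v2, k ∈ ℤ. Let μ1 = dLap(v1, ε) and μ2 = dLap(v2, ε) be discrete Laplace distributions on ℤ with the same scale parameter ε. Then μ1 and μ2 are related by the (|k + v1 − v2|·ε)-approximate lifting of the relation {(z1, z2) ∈ ℤ × ℤ | z1 + k = z2}. -/
open scoped BigOperators

noncomputable section

/-- Mass that a (sub)distribution assigns to a set of outcomes. -/
def mass {A : Type*} (μ : A → ℝ) (E : Set A) : ℝ := ∑' a : E, μ a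

/-- The ε-divergence `Δ_ε(μ1, μ2) = sup_{E ⊆ A} (μ1(E) − exp(ε)·μ2(E))`. -/
def eDiv {A : Type*} (ε : ℝ) (μ1 μ2 : A → ℝ) : ℝ :=
  ⨆ E : Set A, (mass μ1 E - Real.exp ε * mass μ2 E)

/-- `μ` is a probability distribution: pointwise nonnegative with total mass 1. -/
def IsProb {A : Type*} (μ : A → ℝ) : Prop :=
  (∀ a, 0 ≤ μ a) ∧ (∑' a, μ a) = 1

/-- `μ` is a subdistribution: pointwise nonnegative, summable, with total mass at most 1. -/
def IsSubProb {A : Type*} (μ : A → ℝ) : Prop :=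
  (∀ a, 0 ≤ μ a) ∧ Summable μ ∧ (∑' a, μ a) ≤ 1

/-- ε-approximate lifting `μ1 (Ψ)^ε μ2` of a relation `Ψ` between two
probability distributions. -/
def Lifting {A B : Type*} (ε : ℝ) (Ψ : A → B → Prop) (μ1 : A → ℝ) (μ2 : B → ℝ) : Prop :=
  ∃ μL μR : A × B → ℝ, IsProb μL ∧ IsProb μR ∧
    (∀ a, (∑' b, μL (a, b)) = μ1 a) ∧
    (∀ b, (∑' a, μR (a, b)) = μ2 b) ∧
    (∀ p : A × B, (0 < μL p ∨ 0 < μR p) → Ψ p.1 p.2) ∧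
    eDiv ε μL μR ≤ 0

/-- `A` is ε-differentially private w.r.t. the adjacency relation `adj`. -/
def DP {D O : Type*} (ε : ℝ) (adj : D → D → Prop) (A : D → O → ℝ) : Prop :=
  ∀ d1 d2, adj d1 d2 → ∀ o, A d1 o ≤ Real.exp ε * A d2 o

/-- Monadic bind of distributions: `(bind μ f)(b) = Σ_a μ(a)·f(a)(b)`. -/
def pbind {A B : Type*} (μ : A → ℝ) (f : A → B → ℝ) : B → ℝ :=
  fun b => ∑' a, μ a * f a b

/-- Dirac (point-mass) distribution at `a`. -/
def punit {A : Type*} [DecidableEq A] (a : A) : A → ℝ :=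
  fun x => if x = a then 1 else 0

/-- Pushforward of a distribution along `g`: `(map g μ)(b) = Σ_{a : g(a)=b} μ(a)`. -/
def pmap {A B : Type*} (g : A → B) (μ : A → ℝ) : B → ℝ :=
  fun b => ∑' a : {a // g a = b}, μ (a : A)

/-- Discrete Laplace distribution with mean `v` and (inverse scale) parameter `ε`:
`dLap(v, ε)(z) = ((exp ε − 1)/(exp ε + 1))·exp(−ε·|z − v|)`. -/
def dLap (v : ℤ) (ε : ℝ) : ℤ → ℝ :=
  fun z => ((Real.exp ε - 1) / (Real.exp ε + 1)) * Real.exp (-ε * ((|z - v| : ℤ) : ℝ))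

end

/-!
Both distributions are pulled back to a common sample space: draw `z` from `dLap(v1, ε)` for the
left witness and from `dLap(v2 − k, ε)` for the right one, and output `(z, z + k)` in both cases.
The outputs lie in the relation, and shifting by `k` turns `dLap(v2 − k, ε)` into `dLap(v2, ε)`, so
the marginals are right. Since pushing forward preserves pointwise domination, all that remains is
the domination of `dLap(v1, ε)` by a multiple of `dLap(v2 − k, ε)`, and that is the triangle
inequality in the exponent.
-/

section Pushforward

variable {A B C : Type*} {μ ν : A → ℝ}

theorem IsProb.summable (hμ : IsProb μ) : Summable μ :=
  by_contra fun h => zero_ne_one ((tsum_eq_zero_of_not_summable h).symm.trans hμ.2)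

theorem mass_le_mul_mass {c : ℝ} (hμ : Summable μ) (hν : Summable ν) (h : ∀ a, μ a ≤ c * ν a)
    (E : Set A) : mass μ E ≤ c * mass ν E := by
  unfold mass
  rw [← tsum_mul_left]
  exact (hμ.subtype E).tsum_le_tsum (fun a => h a) ((hν.subtype E).mul_left c)

theorem eDiv_nonpos_of_le {ε : ℝ} (hμ : Summable μ) (hν : Summable ν)
    (h : ∀ a, μ a ≤ Real.exp ε * ν a) : eDiv ε μ ν ≤ 0 :=
  ciSup_le fun E => sub_nonpos.mpr (mass_le_mul_mass hμ hν h E)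

theorem pmap_eq_mass (g : A → B) (μ : A → ℝ) (b : B) : pmap g μ b = mass μ (g ⁻¹' {b}) :=
  rfl

theorem IsProb.pmap (hμ : IsProb μ) (g : A → B) : IsProb (pmap g μ) := by
  refine ⟨fun b => tsum_nonneg fun a => hμ.1 a, ?_⟩
  rw [← hμ.2]
  exact (hμ.summable.hasSum.tsum_fiberwise g).tsum_eq

theorem mem_range_of_pmap_ne_zero {g : A → B} {b : B} (h : pmap g μ b ≠ 0) : b ∈ Set.range g := by
  contrapose! h
  have : IsEmpty {a // g a = b} := ⟨fun a => h ⟨a, a.2⟩⟩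
  exact tsum_empty

theorem pmap_apply_of_injective {g : A → B} (hg : g.Injective) (μ : A → ℝ) (a : A) :
    pmap g μ (g a) = μ a :=
  tsum_eq_single (⟨a, rfl⟩ : {a' // g a' = g a}) fun a' ha' =>
    absurd (Subtype.ext (hg a'.2)) ha'

theorem pmap_id (μ : A → ℝ) : pmap id μ = μ :=
  funext (pmap_apply_of_injective Function.injective_id μ)

theorem pmap_pmap (hμ : Summable μ) (g : A → B) (h : B → C) :
    pmap h (pmap g μ) = pmap (h ∘ g) μ := by
  funext c
  let e : (Σ b : {b // h b = c}, {a // g a = b}) ≃ {a // (h ∘ g) a = c} :=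
    { toFun x := ⟨x.2, (congrArg h x.2.2).trans x.1.2⟩
      invFun a := ⟨⟨g a, a.2⟩, a, rfl⟩
      left_inv := by
        rintro ⟨⟨b, _⟩, a, ha : g a = b⟩
        subst ha
        rfl
      right_inv _ := rfl }
  have he : Summable fun x : Σ b : {b // h b = c}, {a // g a = b} => μ x.2 :=
    e.summable_iff.mpr (hμ.subtype {a | (h ∘ g) a = c})
  calc pmap h (pmap g μ) c = ∑' x : Σ b : {b // h b = c}, {a // g a = b}, μ x.2 :=
        he.tsum_sigma.symm
    _ = pmap (h ∘ g) μ c := e.tsum_eq fun a => μ a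

theorem tsum_prodMk_eq_pmap_fst (ρ : A × B → ℝ) (a : A) :
    ∑' b, ρ (a, b) = pmap Prod.fst ρ a :=
  let e : B ≃ {p : A × B // p.1 = a} :=
    { toFun b := ⟨(a, b), rfl⟩
      invFun p := p.1.2
      left_inv _ := rfl
      right_inv := by
        rintro ⟨_, rfl⟩
        rfl }
  e.tsum_eq fun p => ρ p

theorem tsum_prodMk_eq_pmap_snd (ρ : A × B → ℝ) (b : B) :
    ∑' a, ρ (a, b) = pmap Prod.snd ρ b :=
  let e : A ≃ {p : A × B // p.2 = b} :=
    { toFun a := ⟨(a, b), rfl⟩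
      invFun p := p.1.1
      left_inv _ := rfl
      right_inv := by
        rintro ⟨_, rfl⟩
        rfl }
  e.tsum_eq fun p => ρ p

theorem lifting_pmap_of_le {ε : ℝ} {Ψ : B → C → Prop} {f : A → B} {g : A → C} (hμ : IsProb μ)
    (hν : IsProb ν) (hΨ : ∀ a, Ψ (f a) (g a)) (h : ∀ a, μ a ≤ Real.exp ε * ν a) :
    Lifting ε Ψ (pmap f μ) (pmap g ν) := by
  let pair (a : A) : B × C := (f a, g a)
  have hμ' : IsProb (pmap pair μ) := hμ.pmap pair
  have hν' : IsProb (pmap pair ν) := hν.pmap pair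
  refine ⟨pmap pair μ, pmap pair ν, hμ', hν', fun b => ?_, fun c => ?_, fun p hp => ?_, ?_⟩
  · rw [tsum_prodMk_eq_pmap_fst, pmap_pmap hμ.summable]
    rfl
  · rw [tsum_prodMk_eq_pmap_snd, pmap_pmap hν.summable]
    rfl
  · obtain ⟨a, rfl⟩ : p ∈ Set.range pair :=
      hp.elim (fun hμp => mem_range_of_pmap_ne_zero hμp.ne')
        fun hνp => mem_range_of_pmap_ne_zero hνp.ne'
    exact hΨ a
  · refine eDiv_nonpos_of_le hμ'.summable hν'.summable fun p => ?_
    simp only [pmap_eq_mass]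
    exact mass_le_mul_mass hμ.summable hν.summable h _

end Pushforward

section Laplace

theorem hasSum_pow_natAbs {K : Type*} [NormedDivisionRing K] {ξ : K} (h : ‖ξ‖ < 1) :
    HasSum (fun z : ℤ => ξ ^ z.natAbs) ((1 + ξ) / (1 - ξ)) := by
  have hgeom := hasSum_geometric_of_norm_lt_one h
  have hneg : HasSum (fun n : ℕ => ξ ^ (-((n : ℤ) + 1)).natAbs) (ξ * (1 - ξ)⁻¹) := by
    refine (hgeom.mul_left ξ).congr_fun fun n => ?_
    rw [← pow_succ', Int.natAbs_neg]
    rfl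
  rw [div_eq_mul_inv, add_mul, one_mul]
  exact HasSum.of_nat_of_neg_add_one hgeom hneg

theorem dLap_eq_mul_pow (v : ℤ) (ε : ℝ) (z : ℤ) :
    dLap v ε z = (Real.exp ε - 1) / (Real.exp ε + 1) * Real.exp (-ε) ^ (z - v).natAbs := by
  rw [dLap, ← Real.exp_nat_mul, Nat.cast_natAbs, mul_comm (-ε)]

theorem dLap_scale_nonneg {ε : ℝ} (hε : 0 ≤ ε) :
    0 ≤ (Real.exp ε - 1) / (Real.exp ε + 1) :=
  div_nonneg (sub_nonneg.mpr (Real.one_le_exp hε)) (by positivity)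

theorem hasSum_dLap (v : ℤ) {ε : ℝ} (hε : 0 < ε) : HasSum (dLap v ε) 1 := by
  have hlt : ‖Real.exp (-ε)‖ < 1 := by
    rwa [Real.norm_of_nonneg (Real.exp_nonneg _), Real.exp_lt_one_iff, neg_lt_zero]
  have hscale : (Real.exp ε - 1) / (Real.exp ε + 1) *
      ((1 + Real.exp (-ε)) / (1 - Real.exp (-ε))) = 1 := by
    have hexp : Real.exp ε - 1 ≠ 0 := (sub_pos.mpr (Real.one_lt_exp_iff.mpr hε)).ne'
    rw [Real.exp_neg]
    field_simp
  rw [← hscale, funext (dLap_eq_mul_pow v ε)]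
  exact ((Equiv.subRight v).hasSum_iff.mpr (hasSum_pow_natAbs hlt)).mul_left _

theorem isProb_dLap (v : ℤ) {ε : ℝ} (hε : 0 < ε) : IsProb (dLap v ε) :=
  ⟨fun _ => mul_nonneg (dLap_scale_nonneg hε.le) (Real.exp_nonneg _), (hasSum_dLap v hε).tsum_eq⟩

theorem pmap_add_right_dLap (v k : ℤ) (ε : ℝ) : pmap (· + k) (dLap v ε) = dLap (v + k) ε := by
  funext z
  obtain ⟨w, rfl⟩ : ∃ w, w + k = z := ⟨z - k, sub_add_cancel z k⟩
  rw [pmap_apply_of_injective (add_left_injective k), dLap, dLap, add_sub_add_right_eq_sub]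

theorem dLap_le_exp_mul_dLap {ε : ℝ} (hε : 0 ≤ ε) (v w z : ℤ) :
    dLap v ε z ≤ Real.exp (((|v - w| : ℤ) : ℝ) * ε) * dLap w ε z := by
  have htri : ((|z - w| : ℤ) : ℝ) ≤ ((|z - v| : ℤ) : ℝ) + ((|v - w| : ℤ) : ℝ) :=
    mod_cast abs_sub_le z v w
  unfold dLap
  rw [mul_left_comm, ← Real.exp_add]
  gcongr
  · exact dLap_scale_nonneg hε
  · linarith [mul_le_mul_of_nonneg_left htri hε]

end Laplace

/-- Shift coupling for the discrete Laplace distribution: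
`dLap(v1, ε)` and `dLap(v2, ε)` are related by the `|k + v1 − v2|·ε`-approximate
lifting of the relation `{(z1, z2) | z1 + k = z2}`. -/
theorem laplace_shift_coupling (ε : ℝ) (hε : 0 < ε) (v1 v2 k : ℤ) :
    Lifting (((|k + v1 - v2| : ℤ) : ℝ) * ε) (fun z1 z2 => z1 + k = z2)
      (dLap v1 ε) (dLap v2 ε) := by
  have hshift : pmap (· + k) (dLap (v2 - k) ε) = dLap v2 ε := by
    rw [pmap_add_right_dLap, sub_add_cancel]
  have hdist : k + v1 - v2 = v1 - (v2 - k) := by ring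
  rw [← pmap_id (dLap v1 ε), ← hshift, hdist]
  exact lifting_pmap_of_le (isProb_dLap v1 hε) (isProb_dLap (v2 - k) hε) (fun _ => rfl)
    (dLap_le_exp_mul_dLap hε.le v1 (v2 - k))
end

section
/- (Composition of ε-divergence bounds under bind.) Let A, B be countable sets, ε1, ε2 ≥ 0, μ1, μ2 probability distributions on A with Δ_{ε1}(μ1, μ2) ≤ 0, and f1, f2 : A → Δ(B) kernels such that Δ_{ε2}(f1(a), f2(a)) ≤ 0 for every a ∈ A. Then Δ_{ε1+ε2}(bind μ1 f1, bind μ2 f2) ≤ 0. -/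
open scoped BigOperators

/-!
For summable weights, `Δ_ε(μ1, μ2) ≤ 0` is the pointwise domination `μ1 ≤ exp ε · μ2`: test the
supremum on singletons in one direction and sum over an event in the other. Pointwise dominations
of the weights and of the kernels multiply term by term in the series defining `bind`, and
`exp ε1 · exp ε2 = exp (ε1 + ε2)`.
-/

section Divergence

variable {A : Type*} {μ μ1 μ2 : A → ℝ}

theorem mass_sub_const_mul_mass (h1 : Summable μ1) (h2 : Summable μ2) (c : ℝ) (E : Set A) :
    mass μ1 E - c * mass μ2 E = mass (fun a => μ1 a - c * μ2 a) E := by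
  unfold mass
  rw [← tsum_mul_left]
  exact ((h1.subtype E).tsum_sub ((h2.subtype E).mul_left c)).symm

theorem mass_le_tsum_abs (h : Summable μ) (E : Set A) : mass μ E ≤ ∑' a, |μ a| :=
  calc
    mass μ E ≤ ∑' a : E, |μ a| :=
      (h.subtype E).tsum_le_tsum (fun a => le_abs_self (μ a)) (h.abs.subtype E)
    _ ≤ ∑' a, |μ a| := h.abs.tsum_subtype_le _ E fun a => abs_nonneg (μ a)

theorem bddAbove_range_mass_sub (h1 : Summable μ1) (h2 : Summable μ2) (c : ℝ) :
    BddAbove (Set.range fun E : Set A => mass μ1 E - c * mass μ2 E) := by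
  refine ⟨∑' a, |μ1 a - c * μ2 a|, ?_⟩
  rintro _ ⟨E, rfl⟩
  exact (mass_sub_const_mul_mass h1 h2 c E).trans_le
    (mass_le_tsum_abs (h1.sub (h2.mul_left c)) E)

theorem eDiv_nonpos_iff {ε : ℝ} (h1 : Summable μ1) (h2 : Summable μ2) :
    eDiv ε μ1 μ2 ≤ 0 ↔ ∀ a, μ1 a ≤ Real.exp ε * μ2 a := by
  constructor
  · intro h a
    have singleton_nonpos : mass μ1 {a} - Real.exp ε * mass μ2 {a} ≤ 0 :=
      (le_ciSup (bddAbove_range_mass_sub h1 h2 _) {a}).trans h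
    simpa only [mass, tsum_singleton, sub_nonpos] using singleton_nonpos
  · intro h
    refine ciSup_le fun E => ?_
    rw [mass_sub_const_mul_mass h1 h2]
    exact tsum_nonpos fun a => sub_nonpos.2 (h a)

theorem IsProb.isSubProb (h : IsProb μ) : IsSubProb μ := by
  have tsum_ne_zero : ∑' a, μ a ≠ 0 := by
    rw [h.2]
    exact one_ne_zero
  exact ⟨h.1, not_imp_comm.1 tsum_eq_zero_of_not_summable tsum_ne_zero, h.2.le⟩

end Divergence

section Bind

variable {A B : Type*} {μ μ1 μ2 : A → ℝ} {f f1 f2 : A → B → ℝ}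

theorem summable_mul_kernel (hμ : Summable μ) (hf : ∀ a, IsSubProb (f a)) :
    Summable fun p : A × B => μ p.1 * f p.1 p.2 := by
  have row_tsum_le (a : A) : ∑' b, |μ a| * f a b ≤ |μ a| := by
    rw [tsum_mul_left]
    exact mul_le_of_le_one_right (abs_nonneg _) (hf a).2.2
  have abs_summable : Summable fun p : A × B => |μ p.1| * f p.1 p.2 := by
    refine (summable_prod_of_nonneg fun p => mul_nonneg (abs_nonneg _) ((hf p.1).1 p.2)).2
      ⟨fun a => (hf a).2.1.mul_left |μ a|, ?_⟩
    exact hμ.abs.of_nonneg_of_le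
      (fun a => tsum_nonneg fun b => mul_nonneg (abs_nonneg _) ((hf a).1 b)) row_tsum_le
  refine abs_summable.of_norm_bounded fun p => ?_
  rw [Real.norm_eq_abs, abs_mul, abs_of_nonneg ((hf p.1).1 p.2)]

theorem summable_pbind (hμ : Summable μ) (hf : ∀ a, IsSubProb (f a)) : Summable (pbind μ f) :=
  (summable_mul_kernel hμ hf).prod_symm.prod

theorem summable_mul_kernel_apply (hμ : Summable μ) (hf : ∀ a, IsSubProb (f a)) (b : B) :
    Summable fun a => μ a * f a b :=
  (summable_mul_kernel hμ hf).prod_symm.prod_factor b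

theorem pbind_le_mul_pbind {c d : ℝ} {b : B} (hc : 0 ≤ c) (hμ2 : ∀ a, 0 ≤ μ2 a)
    (hf1 : ∀ a, 0 ≤ f1 a b) (hs1 : Summable fun a => μ1 a * f1 a b)
    (hs2 : Summable fun a => μ2 a * f2 a b)
    (hμ : ∀ a, μ1 a ≤ c * μ2 a) (hf : ∀ a, f1 a b ≤ d * f2 a b) :
    pbind μ1 f1 b ≤ c * d * pbind μ2 f2 b :=
  calc
    ∑' a, μ1 a * f1 a b ≤ ∑' a, c * d * (μ2 a * f2 a b) := by
      refine hs1.tsum_le_tsum (fun a => ?_) (hs2.mul_left (c * d))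
      rw [mul_mul_mul_comm]
      exact mul_le_mul (hμ a) (hf a) (hf1 a) (mul_nonneg hc (hμ2 a))
    _ = c * d * ∑' a, μ2 a * f2 a b := tsum_mul_left

end Bind

theorem eDiv_bind_compose_general {A B : Type*} {ε1 ε2 : ℝ} {μ1 μ2 : A → ℝ} {f1 f2 : A → B → ℝ}
    (h1 : IsSubProb μ1) (h2 : IsSubProb μ2)
    (hf1 : ∀ a, IsSubProb (f1 a)) (hf2 : ∀ a, IsSubProb (f2 a))
    (hμ : eDiv ε1 μ1 μ2 ≤ 0) (hf : ∀ a, eDiv ε2 (f1 a) (f2 a) ≤ 0) :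
    eDiv (ε1 + ε2) (pbind μ1 f1) (pbind μ2 f2) ≤ 0 := by
  obtain ⟨-, hs1, -⟩ := h1
  obtain ⟨hμ2, hs2, -⟩ := h2
  have weight_le : ∀ a, μ1 a ≤ Real.exp ε1 * μ2 a := (eDiv_nonpos_iff hs1 hs2).1 hμ
  have kernel_le (a : A) : ∀ b, f1 a b ≤ Real.exp ε2 * f2 a b :=
    (eDiv_nonpos_iff (hf1 a).2.1 (hf2 a).2.1).1 (hf a)
  rw [eDiv_nonpos_iff (summable_pbind hs1 hf1) (summable_pbind hs2 hf2), Real.exp_add]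
  exact fun b => pbind_le_mul_pbind (Real.exp_pos ε1).le hμ2 (fun a => (hf1 a).1 b)
    (summable_mul_kernel_apply hs1 hf1 b) (summable_mul_kernel_apply hs2 hf2 b)
    weight_le fun a => kernel_le a b

/-- Composition of ε-divergence bounds under monadic bind. -/
theorem eDiv_bind_compose {A B : Type*} [Countable A] [Countable B]
    (ε1 ε2 : ℝ) (hε1 : 0 ≤ ε1) (hε2 : 0 ≤ ε2)
    (μ1 μ2 : A → ℝ) (h1 : IsProb μ1) (h2 : IsProb μ2)
    (f1 f2 : A → B → ℝ) (hf1 : ∀ a, IsProb (f1 a)) (hf2 : ∀ a, IsProb (f2 a))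
    (hμ : eDiv ε1 μ1 μ2 ≤ 0) (hf : ∀ a : A, eDiv ε2 (f1 a) (f2 a) ≤ 0) :
    eDiv (ε1 + ε2) (pbind μ1 f1) (pbind μ2 f2) ≤ 0 :=
  eDiv_bind_compose_general h1.isSubProb h2.isSubProb (fun a => (hf1 a).isSubProb)
    (fun a => (hf2 a).isSubProb) hμ hf
end

section
/- (The above-threshold variant without query noise — Algorithm 3 — is not ε-DP for any ε.) Let ε > 0 and t ∈ ℤ, and for q1, q2 ∈ ℤ define the distribution M(q1, q2) on Bool × Bool by sampling T from dLap(t, ε/2) and outputting (decide(q1 ≥ T), decide(q2 ≥ T)). Then Pr[M(0, 1) = (false, true)] > 0 while Pr[M(1, 0) = (false, true)] = 0. Consequently, if q1, q2 : D → ℤ are queries and d1 ∼ d2 are adjacent inputs with q1(d1) = 0, q2(d1) = 1, q1(d2) = 1, q2(d2) = 0 (each query being 1-sensitive on this pair), the algorithm d ↦ M(q1(d), q2(d)) is not ε'-differentially private for any ε' ≥ 0. -/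
open scoped BigOperators

noncomputable section

/-- Algorithm 3 without query noise: sample a noisy threshold `T` from
`dLap(t, ε/2)` and output the pair of comparison outcomes
`(decide (q1 ≥ T), decide (q2 ≥ T))`. -/
def AboveThrNoNoise (t : ℤ) (ε : ℝ) (q1 q2 : ℤ) : Bool × Bool → ℝ :=
  pbind (dLap t (ε / 2)) (fun T => punit (decide (q1 ≥ T), decide (q2 ≥ T)))

end

/-!
The outcome `(false, true)` occurs exactly when the noisy threshold lands in `(q1, q2]`. As both
queries are compared with the same sample, this event has positive probability when `q1 < q2` and
is impossible when `q2 ≤ q1`; a positive probability is never at most `exp ε'` times zero.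
-/

theorem not_dp_of_pos_of_eq_zero {D O : Type*} {ε : ℝ} {adj : D → D → Prop} {A : D → O → ℝ}
    {d1 d2 : D} {o : O} (hadj : adj d1 d2) (hpos : 0 < A d1 o) (hzero : A d2 o = 0) :
    ¬ DP ε adj A := by
  intro hDP
  have hle : A d1 o ≤ Real.exp ε * A d2 o := hDP d1 d2 hadj o
  rw [hzero, mul_zero] at hle
  exact hle.not_gt hpos

theorem pbind_punit_apply {A B : Type*} [DecidableEq B] (μ : A → ℝ) (g : A → B) (b : B) :
    pbind μ (fun a => punit (g a)) b = mass μ (g ⁻¹' {b}) := by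
  classical
  rw [mass, tsum_subtype]
  refine tsum_congr fun a => ?_
  simp [punit, Set.indicator_apply, eq_comm]

theorem dLap_pos (v : ℤ) {ε : ℝ} (hε : 0 < ε) (z : ℤ) : 0 < dLap v ε z := by
  have hnum : 0 < Real.exp ε - 1 := sub_pos.mpr (Real.one_lt_exp_iff.mpr hε)
  unfold dLap
  positivity

theorem preimage_decide_ge_false_true {α : Type*} [LinearOrder α] (q1 q2 : α) :
    (fun T : α => (decide (q1 ≥ T), decide (q2 ≥ T))) ⁻¹' {(false, true)} = Set.Ioc q1 q2 := by
  ext T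
  simp

theorem aboveThrNoNoise_false_true (t : ℤ) (ε : ℝ) (q1 q2 : ℤ) :
    AboveThrNoNoise t ε q1 q2 (false, true) = ∑ T ∈ Finset.Ioc q1 q2, dLap t (ε / 2) T := by
  rw [AboveThrNoNoise, pbind_punit_apply, preimage_decide_ge_false_true, mass,
    ← Finset.coe_Ioc, Finset.tsum_subtype']

theorem aboveThrNoNoise_false_true_pos (t : ℤ) {ε : ℝ} (hε : 0 < ε) {q1 q2 : ℤ} (h : q1 < q2) :
    0 < AboveThrNoNoise t ε q1 q2 (false, true) := by
  rw [aboveThrNoNoise_false_true]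
  exact Finset.sum_pos (fun T _ => dLap_pos t (half_pos hε) T) (Finset.nonempty_Ioc.mpr h)

theorem aboveThrNoNoise_false_true_eq_zero (t : ℤ) (ε : ℝ) {q1 q2 : ℤ} (h : q2 ≤ q1) :
    AboveThrNoNoise t ε q1 q2 (false, true) = 0 := by
  rw [aboveThrNoNoise_false_true, Finset.Ioc_eq_empty_of_le h, Finset.sum_empty]

theorem above_threshold_no_noise_not_dp_general {D : Type*} (ε : ℝ) (hε : 0 < ε) (t : ℤ)
    (adj : D → D → Prop) (q1 q2 : D → ℤ) (d1 d2 : D) (hadj : adj d1 d2)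
    (hlt : q1 d1 < q2 d1) (hle : q2 d2 ≤ q1 d2) :
    0 < AboveThrNoNoise t ε (q1 d1) (q2 d1) (false, true) ∧
    AboveThrNoNoise t ε (q1 d2) (q2 d2) (false, true) = 0 ∧
    ∀ ε' : ℝ, ¬ DP ε' adj (fun d => AboveThrNoNoise t ε (q1 d) (q2 d)) := by
  have hpos := aboveThrNoNoise_false_true_pos t hε hlt
  have hzero := aboveThrNoNoise_false_true_eq_zero t ε hle
  exact ⟨hpos, hzero, fun _ => not_dp_of_pos_of_eq_zero hadj hpos hzero⟩

/-- The above-threshold variant without query noise (Algorithm 3) is not ε-DP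
for any ε. -/
theorem above_threshold_no_noise_not_dp {D : Type*} (ε : ℝ) (hε : 0 < ε) (t : ℤ)
    (adj : D → D → Prop) (q1 q2 : D → ℤ) (d1 d2 : D) (hadj : adj d1 d2)
    (h11 : q1 d1 = 0) (h21 : q2 d1 = 1) (h12 : q1 d2 = 1) (h22 : q2 d2 = 0) :
    0 < AboveThrNoNoise t ε 0 1 (false, true) ∧
    AboveThrNoNoise t ε 1 0 (false, true) = 0 ∧
    (∀ ε' : ℝ, 0 ≤ ε' →
      ¬ DP ε' adj (fun d => AboveThrNoNoise t ε (q1 d) (q2 d))) := by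
  obtain ⟨hpos, hzero, hnotDP⟩ :=
    above_threshold_no_noise_not_dp_general ε hε t adj q1 q2 d1 d2 hadj (by lia) (by lia)
  exact ⟨h11 ▸ h21 ▸ hpos, h12 ▸ h22 ▸ hzero, fun ε' _ => hnotDP ε'⟩
end

section
/- (The corrected above-threshold algorithm is ε-differentially private.) Let ε > 0, n ≥ 1, t ∈ ℤ, and let q1, …, qn : D → ℤ be queries each 1-sensitive with respect to an adjacency relation ∼ on D. Define the algorithm AT : D → Δ({1, …, n} ∪ {⊥}) as follows: sample T from dLap(t, ε/2); independently sample S_i from dLap(q_i(d), ε/4) for i = 1, …, n; output the least index i with S_i ≥ T if one exists, and ⊥ otherwise. Then AT is ε-differentially private with respect to ∼. -/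
open scoped BigOperators

noncomputable section

/-- The least index `i` with `T ≤ S i`, or `none` if there is no such index. -/
def firstAbove {n : ℕ} (T : ℤ) (S : Fin n → ℤ) : Option (Fin n) :=
  if h : ∃ i, T ≤ S i then
    some ((Finset.univ.filter fun i => T ≤ S i).min'
      ⟨h.choose, Finset.mem_filter.mpr ⟨Finset.mem_univ _, h.choose_spec⟩⟩)
  else none

/-- The corrected above-threshold algorithm: sample a noisy threshold `T` from
`dLap(t, ε/2)`, independently sample `S i` from `dLap(q i, ε/4)` for each query,
and return the least index `i` with `S i ≥ T`, or `none` (⊥) if there is none. -/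
def AT (n : ℕ) (t : ℤ) (ε : ℝ) (qv : Fin n → ℤ) : Option (Fin n) → ℝ :=
  fun o => ∑' T : ℤ, ∑' S : Fin n → ℤ,
    (dLap t (ε / 2) T * ∏ i, dLap (qv i) (ε / 4) (S i)) *
      (if firstAbove T S = o then 1 else 0)

end

/-!
Fix the output `o`. Raise the noisy threshold by `1`, raise the noisy answer of the selected query
(if any) by `1` as well, and translate every other noisy answer along with its true answer, hence by
at most `1`. This maps runs on the first database with output `o` injectively to runs on the second
with output `o`. The threshold costs a factor `exp (ε / 2)`; the selected answer is displaced by at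
most `2` relative to its mean and costs at most `exp (2 * (ε / 4))`; the other answers cost nothing.
-/

lemma mass_le_mul_mass_of_injOn {A B : Type*} {μ : A → ℝ} {ν : B → ℝ} {E : Set A}
    {F : Set B} {C : ℝ} {φ : A → B} (hμ : Summable μ) (hν : Summable ν)
    (hν_nonneg : ∀ b, 0 ≤ ν b) (hC : 0 ≤ C) (hφ : Set.InjOn φ E) (hEF : Set.MapsTo φ E F)
    (hle : ∀ a ∈ E, μ a ≤ C * ν (φ a)) :
    mass μ E ≤ C * mass ν F := by
  unfold mass
  rw [← tsum_mul_left]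
  exact (hμ.subtype E).tsum_le_tsum_of_inj (hEF.restrict φ E F) (hEF.restrict_inj.2 hφ)
    (fun b _ => mul_nonneg hC (hν_nonneg b)) (fun a => hle a a.2)
    ((hν.subtype F).mul_left C)

lemma summable_pi_prod_of_nonneg {ι : Type*} [Fintype ι] {κ : ι → Type*} {f : ∀ i, κ i → ℝ}
    (hf_nonneg : ∀ i k, 0 ≤ f i k) (hf : ∀ i, Summable (f i)) :
    Summable fun x : ∀ i, κ i => ∏ i, f i (x i) := by
  classical
  have hprod_nonneg (x : ∀ i, κ i) : 0 ≤ ∏ i, f i (x i) :=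
    Finset.prod_nonneg fun i _ => hf_nonneg i (x i)
  refine summable_of_sum_le (c := ∏ i, ∑' k, f i k) hprod_nonneg fun u => ?_
  let box : ∀ i, Finset (κ i) := fun i => u.image fun x => x i
  have hbox : u ⊆ Fintype.piFinset box := fun x hx =>
    Fintype.mem_piFinset.2 fun i => Finset.mem_image_of_mem (fun x => x i) hx
  calc ∑ x ∈ u, ∏ i, f i (x i)
      ≤ ∑ x ∈ Fintype.piFinset box, ∏ i, f i (x i) :=
        Finset.sum_le_sum_of_subset_of_nonneg hbox fun x _ _ => hprod_nonneg x
    _ = ∏ i, ∑ k ∈ box i, f i k := (Finset.prod_univ_sum box f).symm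
    _ ≤ ∏ i, ∑' k, f i k :=
        Finset.prod_le_prod (fun i _ => Finset.sum_nonneg fun k _ => hf_nonneg i k)
          fun i _ => (hf i).sum_le_tsum (box i) fun k _ => hf_nonneg i k

section DiscreteLaplace

variable {ε : ℝ}

lemma dLap_nonneg (hε : 0 ≤ ε) (v z : ℤ) : 0 ≤ dLap v ε z := by
  have hexp : 0 ≤ Real.exp ε - 1 := sub_nonneg.2 (Real.one_le_exp hε)
  unfold dLap
  positivity

lemma summable_dLap (hε : 0 < ε) (v : ℤ) : Summable (dLap v ε) := by
  have hnat : Summable fun k : ℕ => Real.exp (-ε * k) := by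
    simpa only [mul_comm] using Real.summable_exp_nat_mul_iff.2 (neg_neg_of_pos hε)
  have hint : Summable fun z : ℤ => Real.exp (-ε * ((|z| : ℤ) : ℝ)) := by
    apply Summable.of_nat_of_neg <;> simpa using hnat
  exact ((Equiv.subRight v).summable_iff.2 hint).mul_left _

lemma dLap_le_exp_mul_dLap_add (hε : 0 ≤ ε) (v w z c : ℤ) :
    dLap v ε z ≤ Real.exp (ε * |(v + c - w : ℤ)|) * dLap w ε (z + c) := by
  have hnorm : 0 ≤ (Real.exp ε - 1) / (Real.exp ε + 1) :=
    div_nonneg (sub_nonneg.2 (Real.one_le_exp hε)) (by positivity)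
  have htri : (|z + c - w| : ℤ) ≤ |v + c - w| + |z - v| :=
    calc |z + c - w| = |(v + c - w) + (z - v)| := by congr 1; ring
      _ ≤ |v + c - w| + |z - v| := abs_add_le _ _
  have hscaled : ε * (|z + c - w| : ℤ) ≤ ε * ((|v + c - w| : ℤ) + (|z - v| : ℤ)) :=
    mul_le_mul_of_nonneg_left (mod_cast htri) hε
  unfold dLap
  rw [mul_left_comm, ← Real.exp_add]
  gcongr
  linarith

lemma prod_dLap_le_exp_mul_prod_dLap_add {ι : Type*} [Fintype ι] (hε : 0 ≤ ε)
    (v w S c : ι → ℤ) :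
    ∏ i, dLap (v i) ε (S i) ≤
      Real.exp (ε * (∑ i, |v i + c i - w i| : ℤ)) * ∏ i, dLap (w i) ε ((S + c) i) := by
  calc ∏ i, dLap (v i) ε (S i)
      ≤ ∏ i, Real.exp (ε * |(v i + c i - w i : ℤ)|) * dLap (w i) ε (S i + c i) :=
        Finset.prod_le_prod (fun i _ => dLap_nonneg hε (v i) (S i))
          fun i _ => dLap_le_exp_mul_dLap_add hε (v i) (w i) (S i) (c i)
    _ = Real.exp (ε * (∑ i, |v i + c i - w i| : ℤ)) * ∏ i, dLap (w i) ε ((S + c) i) := by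
        rw [Finset.prod_mul_distrib, ← Real.exp_sum, ← Finset.mul_sum]
        push_cast
        rfl

end DiscreteLaplace

section FirstAbove

variable {n : ℕ} {T m : ℤ} {S c : Fin n → ℤ} {o : Option (Fin n)}

lemma firstAbove_eq_none_iff : firstAbove T S = none ↔ ∀ i, S i < T := by
  simp [firstAbove]

lemma firstAbove_eq_some_iff {k : Fin n} :
    firstAbove T S = some k ↔ T ≤ S k ∧ ∀ i < k, S i < T := by
  unfold firstAbove
  split_ifs with h
  · refine (Option.some_inj.trans (Finset.min'_eq_iff _ _ _)).trans ?_
    simp only [Finset.mem_filter, Finset.mem_univ, true_and]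
    exact and_congr_right fun _ => forall_congr' fun i => by
      rw [← not_lt, ← not_lt, not_imp_not]
  · simp only [false_iff, not_and]
    exact fun hk => absurd ⟨k, hk⟩ h

lemma firstAbove_add_eq (h : firstAbove T S = o) (hc : ∀ i, c i ≤ m)
    (hco : ∀ i ∈ o, m ≤ c i) : firstAbove (T + m) (S + c) = o := by
  rcases o with _ | k
  · rw [firstAbove_eq_none_iff] at h ⊢
    exact fun i => add_lt_add_of_lt_of_le (h i) (hc i)
  · rw [firstAbove_eq_some_iff] at h ⊢
    exact ⟨add_le_add h.1 (hco k rfl), fun i hi => add_lt_add_of_lt_of_le (h.2 i hi) (hc i)⟩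

end FirstAbove

section AboveThreshold

variable {n : ℕ} {ε : ℝ}

/-- The joint law of the noisy threshold `p.1` and the noisy query answers `p.2` sampled by the
above-threshold algorithm `AT`. -/
noncomputable def jointLaw (t : ℤ) (ε : ℝ) (v : Fin n → ℤ) (p : ℤ × (Fin n → ℤ)) : ℝ :=
  dLap t (ε / 2) p.1 * ∏ i, dLap (v i) (ε / 4) (p.2 i)

lemma jointLaw_nonneg (hε : 0 ≤ ε) (t : ℤ) (v : Fin n → ℤ) (p : ℤ × (Fin n → ℤ)) :
    0 ≤ jointLaw t ε v p :=
  mul_nonneg (dLap_nonneg (by positivity) t p.1)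
    (Finset.prod_nonneg fun i _ => dLap_nonneg (by positivity) (v i) (p.2 i))

lemma summable_jointLaw (hε : 0 < ε) (t : ℤ) (v : Fin n → ℤ) : Summable (jointLaw t ε v) := by
  have hε2 : 0 < ε / 2 := by positivity
  have hε4 : 0 < ε / 4 := by positivity
  have hanswers_nonneg : ∀ S : Fin n → ℤ, 0 ≤ ∏ i, dLap (v i) (ε / 4) (S i) := fun S =>
    Finset.prod_nonneg fun i _ => dLap_nonneg hε4.le (v i) (S i)
  have hanswers : Summable fun S : Fin n → ℤ => ∏ i, dLap (v i) (ε / 4) (S i) :=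
    summable_pi_prod_of_nonneg (fun i => dLap_nonneg hε4.le (v i)) fun i => summable_dLap hε4 (v i)
  exact ((summable_dLap hε2 t).mul_of_nonneg hanswers (dLap_nonneg hε2.le t) hanswers_nonneg :)

lemma jointLaw_le_exp_mul_jointLaw_add (hε : 0 ≤ ε) (t : ℤ) (v w : Fin n → ℤ)
    (p c : ℤ × (Fin n → ℤ)) :
    jointLaw t ε v p ≤
      Real.exp (ε / 2 * |c.1| + ε / 4 * (∑ i, |v i + c.2 i - w i| : ℤ)) *
        jointLaw t ε w (p + c) := by
  have hε2 : 0 ≤ ε / 2 := by positivity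
  have hε4 : 0 ≤ ε / 4 := by positivity
  have hT : dLap t (ε / 2) p.1 ≤ Real.exp (ε / 2 * |c.1|) * dLap t (ε / 2) (p.1 + c.1) := by
    simpa using dLap_le_exp_mul_dLap_add hε2 t t p.1 c.1
  have hS := prod_dLap_le_exp_mul_prod_dLap_add hε4 v w p.2 c.2
  rw [Real.exp_add]
  unfold jointLaw
  rw [mul_mul_mul_comm]
  exact mul_le_mul hT hS (Finset.prod_nonneg fun i _ => dLap_nonneg hε4 (v i) (p.2 i))
    (mul_nonneg (Real.exp_pos _).le (dLap_nonneg hε2 t _))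

lemma AT_eq_mass_jointLaw (hε : 0 < ε) (t : ℤ) (v : Fin n → ℤ) (o : Option (Fin n)) :
    AT n t ε v o = mass (jointLaw t ε v) {p | firstAbove p.1 p.2 = o} := by
  unfold mass
  rw [tsum_subtype, ((summable_jointLaw hε t v).indicator _).tsum_prod]
  simp only [AT, jointLaw, Set.indicator_apply, Set.mem_ofPred_eq, mul_ite, mul_one, mul_zero]

lemma AT_nonneg (hε : 0 < ε) (t : ℤ) (v : Fin n → ℤ) (o : Option (Fin n)) :
    0 ≤ AT n t ε v o := by
  rw [AT_eq_mass_jointLaw hε]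
  exact tsum_nonneg fun p => jointLaw_nonneg hε.le t v p

lemma AT_le_exp_mul_AT_of_shift (hε : 0 < ε) (t : ℤ) (v w : Fin n → ℤ) (o : Option (Fin n))
    (c : ℤ × (Fin n → ℤ))
    (hout : ∀ T S, firstAbove T S = o → firstAbove (T + c.1) (S + c.2) = o) :
    AT n t ε v o ≤
      Real.exp (ε / 2 * |c.1| + ε / 4 * (∑ i, |v i + c.2 i - w i| : ℤ)) * AT n t ε w o := by
  rw [AT_eq_mass_jointLaw hε, AT_eq_mass_jointLaw hε]
  exact mass_le_mul_mass_of_injOn (summable_jointLaw hε t v) (summable_jointLaw hε t w)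
    (jointLaw_nonneg hε.le t w) (Real.exp_pos _).le (add_left_injective c).injOn
    (fun p hp => hout p.1 p.2 hp)
    fun p _ => jointLaw_le_exp_mul_jointLaw_add hε.le t v w p c

/-- How far each noisy answer is moved, when the true answers change from `v` to `w`, in order to
keep the output `o` while the noisy threshold grows by `1`: the selected answer follows the
threshold, every other answer follows its mean. -/
def answerShift (v w : Fin n → ℤ) (o : Option (Fin n)) (i : Fin n) : ℤ :=
  if o = some i then 1 else w i - v i

lemma firstAbove_add_answerShift {v w : Fin n → ℤ} (hvw : ∀ i, |v i - w i| ≤ 1) {T : ℤ}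
    {S : Fin n → ℤ} {o : Option (Fin n)} (h : firstAbove T S = o) :
    firstAbove (T + 1) (S + answerShift v w o) = o := by
  refine firstAbove_add_eq h (fun i => ?_) fun i hi => ?_
  · have := abs_le.1 (hvw i)
    unfold answerShift
    split_ifs <;> omega
  · exact (if_pos hi).ge

lemma sum_abs_add_answerShift_sub_le {v w : Fin n → ℤ} (hvw : ∀ i, |v i - w i| ≤ 1)
    (o : Option (Fin n)) : ∑ i, |v i + answerShift v w o i - w i| ≤ 2 := by
  rcases o with _ | k
  · simp [answerShift]
  · have hother : ∀ i, i ≠ k → |v i + answerShift v w (some k) i - w i| = 0 := fun i hi => by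
      simp [answerShift, hi.symm]
    rw [Fintype.sum_eq_single k hother]
    have := abs_le.1 (hvw k)
    simp only [answerShift, if_true, abs_le]
    omega

end AboveThreshold

/-- The corrected above-threshold algorithm is ε-differentially private. -/
theorem above_threshold_dp {D : Type*} (ε : ℝ) (hε : 0 < ε) (n : ℕ) (hn : 1 ≤ n)
    (t : ℤ) (adj : D → D → Prop) (q : Fin n → D → ℤ)
    (hsens : ∀ i x y, adj x y → |q i x - q i y| ≤ 1) :
    DP ε adj (fun d => AT n t ε (fun i => q i d)) := by
  intro x y hxy o
  let v : Fin n → ℤ := fun i => q i x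
  let w : Fin n → ℤ := fun i => q i y
  have hvw : ∀ i, |v i - w i| ≤ 1 := fun i => hsens i x y hxy
  have hcost : ((∑ i, |v i + answerShift v w o i - w i| : ℤ) : ℝ) ≤ 2 :=
    mod_cast sum_abs_add_answerShift_sub_le hvw o
  calc AT n t ε v o
      ≤ Real.exp (ε / 2 * |(1 : ℤ)| +
          ε / 4 * (∑ i, |v i + answerShift v w o i - w i| : ℤ)) * AT n t ε w o :=
        AT_le_exp_mul_AT_of_shift hε t v w o (1, answerShift v w o)
          fun _ _ => firstAbove_add_answerShift hvw
    _ ≤ Real.exp (ε / 2 * |(1 : ℤ)| + ε / 4 * 2) * AT n t ε w o := by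
        gcongr
        exact AT_nonneg hε t w o
    _ = Real.exp ε * AT n t ε w o := by
        rw [abs_one, Int.cast_one]
        ring_nf
end
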